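/- Let σ ∈ K_n with n > 4, and let π ∈ K_{n−2} be such that π ≺ σ. Then there exists τ ∈ K_{n−1} such that π ≺ τ ≺ σ. -/

import Mathlib

open Equiv

/-- The Manhattan distance between two elements of `Fin n`. -/
def fdist {n : ℕ} (a b : Fin n) : ℕ := ((a : ℤ) - (b : ℤ)).natAbs

/-- A king permutation: no two adjacent positions carry adjacent values. -/
def IsKing {n : ℕ} (σ : Equiv.Perm (Fin n)) : Prop :=
  ∀ i j : Fin n, (j : ℕ) = (i : ℕ) + 1 → fdist (σ i) (σ j) ≠ 1

/-- Pattern containment `π ⪯ σ`. -/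
def Contains {m n : ℕ} (π : Equiv.Perm (Fin m)) (σ : Equiv.Perm (Fin n)) : Prop :=
  ∃ f : Fin m ↪o Fin n, ∀ a b : Fin m, π a < π b ↔ σ (f a) < σ (f b)

/-- Strict pattern containment `π ≺ σ`. -/
def StrictContains {m n : ℕ} (π : Equiv.Perm (Fin m)) (σ : Equiv.Perm (Fin n)) : Prop :=
  Contains π σ ∧ m < n

/-- `nabla σ i` deletes the `i`-th entry of `σ` and standardizes. -/
def nabla {n : ℕ} (σ : Equiv.Perm (Fin (n + 1))) (i : Fin (n + 1)) : Equiv.Perm (Fin n) :=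
  Equiv.removeNone ((finSuccEquiv' i).symm.trans (σ.trans (finSuccEquiv' (σ i))))

/-- `nablaStar σ a` deletes the value `a` from `σ` and standardizes. -/
def nablaStar {n : ℕ} (σ : Equiv.Perm (Fin (n + 1))) (a : Fin (n + 1)) : Equiv.Perm (Fin n) :=
  nabla σ (σ⁻¹ a)

/-- The permutation [2413] (0-based one-line notation [1,3,0,2]). -/
def p2413 : Equiv.Perm (Fin 4) :=
  ⟨![1, 3, 0, 2], ![2, 0, 3, 1], by intro x; fin_cases x <;> rfl, by intro x; fin_cases x <;> rfl⟩

/-- The permutation [3142] (0-based one-line notation [2,0,3,1]). -/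
def p3142 : Equiv.Perm (Fin 4) :=
  ⟨![2, 0, 3, 1], ![1, 3, 0, 2], by intro x; fin_cases x <;> rfl, by intro x; fin_cases x <;> rfl⟩

/-- `σ i` vertically separates `σ j` from `σ k`. -/
def VSep {n : ℕ} (σ : Equiv.Perm (Fin n)) (i j k : Fin n) : Prop :=
  i ≠ j ∧ i ≠ k ∧ j ≠ k ∧ fdist i j = 1 ∧ fdist i k = 1 ∧ fdist (σ j) (σ k) = 1

/-- `σ i` horizontally separates `σ j` from `σ k`. -/
def HSep {n : ℕ} (σ : Equiv.Perm (Fin n)) (i j k : Fin n) : Prop :=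
  i ≠ j ∧ i ≠ k ∧ j ≠ k ∧ fdist (σ i) (σ j) = 1 ∧ fdist (σ i) (σ k) = 1 ∧ fdist j k = 1

/-- `σ i` separates `σ j` from `σ k`. -/
def Separates {n : ℕ} (σ : Equiv.Perm (Fin n)) (i j k : Fin n) : Prop :=
  VSep σ i j k ∨ HSep σ i j k

/-- `π` has a 2-block at positions `j`, `j+1` (0-based). -/
def HasTwoBlockAt {n : ℕ} (π : Equiv.Perm (Fin n)) (j : ℕ) : Prop :=
  ∃ hj : j + 1 < n, fdist (π ⟨j, by omega⟩) (π ⟨j + 1, hj⟩) = 1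

/-- `π` has a 3-block at positions `p`, `p+1`, `p+2` (0-based). -/
def HasThreeBlockAt {n : ℕ} (π : Equiv.Perm (Fin n)) (p : ℕ) : Prop :=
  ∃ hp : p + 2 < n, ∃ m : ℕ,
    ({(π ⟨p, by omega⟩ : ℕ), (π ⟨p + 1, by omega⟩ : ℕ), (π ⟨p + 2, by omega⟩ : ℕ)} : Finset ℕ)
      = {m, m + 1, m + 2}

/-!
Deleting an entry `σ a` of a king permutation creates an adjacency only between two entries which
`σ a` separates. Fix an occurrence of `π` in `σ`, missing exactly the positions `a` and `b`. As `π`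
is a king, those two entries cannot both belong to the occurrence, so if deleting `σ a` does not
leave a king, then `σ a` separates `σ b` from some `σ k`. In particular `a` and `b` are adjacent
positions or, up to passing to inverses, become so.

When the missing positions are `q - 1` and `q` and deleting `σ q` does not leave a king, the entries
at `q - 1` and `q + 1` have adjacent values, hence are interchangeable, and `π` also occurs missing
`q` and `q + 1`. Repeating this, the missing pair travels to the right until a deletion succeeds.
-/

section Distance

variable {m n : ℕ}

theorem fdist_comm (a b : Fin n) : fdist a b = fdist b a := by
  simp only [fdist]; omega

theorem fdist_eq_one_iff_covBy {a b : Fin n} : fdist a b = 1 ↔ a ⋖ b ∨ b ⋖ a := by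
  simp only [fdist, Fin.covBy_iff, Nat.covBy_iff_add_one_eq]; omega

theorem fdist_eq_one_of_fdist_apply (f : Fin m ↪o Fin n) {x y : Fin m}
    (h : fdist (f x) (f y) = 1) : fdist x y = 1 :=
  fdist_eq_one_iff_covBy.2 <|
    (fdist_eq_one_iff_covBy.1 h).imp (CovBy.of_image f) (CovBy.of_image f)

theorem fdist_eq_one_of_straddle {f : Fin m ↪o Fin n} {a : Fin n} (ha : a ∉ Set.range f)
    {x y : Fin m} (hxy : x ≠ y) (hx : fdist a (f x) = 1) (hy : fdist a (f y) = 1) :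
    fdist x y = 1 := by
  wlog hlt : x < y generalizing x y
  · rw [fdist_comm]
    exact this hxy.symm hy hx (hxy.lt_or_gt.resolve_left hlt)
  refine fdist_eq_one_iff_covBy.2 (.inl ⟨hlt, fun z hxz hzy => ha ⟨z, ?_⟩⟩)
  have hfxz : f x < f z := f.strictMono hxz
  have hfzy : f z < f y := f.strictMono hzy
  simp only [fdist] at hx hy
  omega

theorem fdist_succAbove (a : Fin (n + 1)) {i j : Fin n} (h : fdist i j = 1) :
    fdist (a.succAbove i) (a.succAbove j) = 1 ∨
      fdist a (a.succAbove i) = 1 ∧ fdist a (a.succAbove j) = 1 := by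
  simp only [fdist, Fin.succAbove, Fin.lt_def, Fin.val_castSucc] at *
  split_ifs <;> simp only [Fin.val_castSucc, Fin.val_succ] <;> omega

end Distance

theorem swap_lt_swap_iff {α : Type*} [LinearOrder α] {p r u v : α} (hu : u ≠ p) (hv : v ≠ p)
    (hur : u ≠ r → (u < p ↔ u < r)) (hvr : v ≠ r → (v < p ↔ v < r)) :
    swap p r u < swap p r v ↔ u < v := by
  grind

namespace IsKing

variable {n : ℕ} {σ : Perm (Fin n)}

theorem fdist_apply_ne_one (hσ : IsKing σ) {i j : Fin n} (h : fdist i j = 1) :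
    fdist (σ i) (σ j) ≠ 1 := by
  rcases fdist_eq_one_iff_covBy.1 h with h | h <;>
    rw [Fin.covBy_iff, Nat.covBy_iff_add_one_eq] at h
  · exact hσ i j h.symm
  · rw [fdist_comm]
    exact hσ j i h.symm

theorem inv (hσ : IsKing σ) : IsKing σ⁻¹ := by
  intro i j hij hd
  refine hσ.fdist_apply_ne_one hd ?_
  simp only [Perm.coe_inv, apply_symm_apply, fdist]
  omega

end IsKing

theorem Separates.symm {n : ℕ} {σ : Perm (Fin n)} {i j k : Fin n} (h : Separates σ i j k) :
    Separates σ i k j :=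
  h.imp (fun ⟨hij, hik, hjk, dij, dik, djk⟩ => ⟨hik, hij, hjk.symm, dik, dij, fdist_comm _ _ ▸ djk⟩)
    (fun ⟨hij, hik, hjk, dij, dik, djk⟩ => ⟨hik, hij, hjk.symm, dik, dij, fdist_comm _ _ ▸ djk⟩)

theorem succAbove_nabla {n : ℕ} (σ : Perm (Fin (n + 1))) (a : Fin (n + 1)) (i : Fin n) :
    (σ a).succAbove (nabla σ a i) = σ (a.succAbove i) := by
  obtain ⟨v, hv⟩ := Fin.exists_succAbove_eq (σ.injective.ne (Fin.succAbove_ne a i))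
  set e := (finSuccEquiv' a).symm.trans (σ.trans (finSuccEquiv' (σ a)))
  have he : e (some i) = some v := by
    simp only [e, trans_apply, finSuccEquiv'_symm_some, ← hv, finSuccEquiv'_succAbove]
  have hnabla : some (nabla σ a i) = some v := (removeNone_some e ⟨v, he⟩).trans he
  rw [Option.some.inj hnabla, hv]

theorem IsKing.exists_separates_of_not_isKing_nabla {n : ℕ} {σ : Perm (Fin (n + 1))}
    (hσ : IsKing σ) {a : Fin (n + 1)} (h : ¬IsKing (nabla σ a)) : ∃ j k, Separates σ a j k := by
  simp only [IsKing, not_forall, not_not] at h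
  obtain ⟨i, j, hij, hval⟩ := h
  have hpos : fdist i j = 1 := by simp only [fdist]; omega
  have hne : a.succAbove i ≠ a.succAbove j :=
    Fin.succAbove_right_injective.ne (by rintro rfl; omega)
  have hi := (Fin.succAbove_ne a i).symm
  have hj := (Fin.succAbove_ne a j).symm
  have hval' := fdist_succAbove (σ a) hval
  simp only [succAbove_nabla] at hval'
  refine ⟨a.succAbove i, a.succAbove j, ?_⟩
  rcases fdist_succAbove a hpos with hadj | ⟨hai, haj⟩ <;> rcases hval' with hadj' | ⟨hai', haj'⟩
  · exact absurd hadj' (hσ.fdist_apply_ne_one hadj)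
  · exact .inr ⟨hi, hj, hne, hai', haj', hadj⟩
  · exact .inl ⟨hi, hj, hne, hai, haj, hadj'⟩
  · exact absurd hai' (hσ.fdist_apply_ne_one hai)

/-- The positions `f 0 < f 1 < ⋯` of `σ` carry an occurrence of the pattern `π`;
`Contains π σ` says that some `f` does so. -/
def IsOccurrence {m n : ℕ} (π : Perm (Fin m)) (σ : Perm (Fin n)) (f : Fin m ↪o Fin n) : Prop :=
  ∀ a b : Fin m, π a < π b ↔ σ (f a) < σ (f b)

theorem isOccurrence_nabla {n : ℕ} (σ : Perm (Fin (n + 1))) (a : Fin (n + 1)) :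
    IsOccurrence (nabla σ a) σ (Fin.succAboveOrderEmb a) := fun x y => by
  simp only [Fin.succAboveOrderEmb_apply, ← succAbove_nabla, Fin.succAbove_lt_succAbove_iff]

theorem nabla_contains {n : ℕ} (σ : Perm (Fin (n + 1))) (a : Fin (n + 1)) :
    Contains (nabla σ a) σ :=
  ⟨_, isOccurrence_nabla σ a⟩

namespace IsOccurrence

variable {m n : ℕ} {π : Perm (Fin m)} {σ : Perm (Fin n)} {f : Fin m ↪o Fin n}

/-- The values taken by an occurrence, in increasing order: `v` is sent to the entry of `σ` that
plays the role of the entry `v` of `π`. -/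
def valueEmb (hf : IsOccurrence π σ f) : Fin m ↪o Fin n :=
  OrderEmbedding.ofStrictMono (fun v => σ (f (π⁻¹ v))) fun v w hvw =>
    (hf _ _).1 (by simpa only [Perm.coe_inv, apply_symm_apply] using hvw)

theorem valueEmb_apply (hf : IsOccurrence π σ f) (v : Fin m) : hf.valueEmb v = σ (f (π⁻¹ v)) :=
  rfl

theorem valueEmb_apply_apply (hf : IsOccurrence π σ f) (x : Fin m) :
    hf.valueEmb (π x) = σ (f x) := by
  rw [valueEmb_apply, Perm.coe_inv, symm_apply_apply]

theorem range_valueEmb (hf : IsOccurrence π σ f) : Set.range hf.valueEmb = σ '' Set.range f := by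
  rw [← π.surjective.range_comp hf.valueEmb, ← Set.range_comp]
  exact congrArg Set.range (funext hf.valueEmb_apply_apply)

theorem inv (hf : IsOccurrence π σ f) : IsOccurrence π⁻¹ σ⁻¹ hf.valueEmb := fun v w => by
  simp only [valueEmb_apply, Perm.coe_inv, symm_apply_apply, f.lt_iff_lt]

theorem not_separates (hf : IsOccurrence π σ f) (hπ : IsKing π) {a : Fin n}
    (ha : a ∉ Set.range f) (x y : Fin m) : ¬Separates σ a (f x) (f y) := by
  rintro (⟨-, -, hxy, hax, hay, hval⟩ | ⟨-, -, hxy, hax, hay, hpos⟩)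
  · have hxy' : fdist x y = 1 := fdist_eq_one_of_straddle ha (ne_of_apply_ne f hxy) hax hay
    simp only [← hf.valueEmb_apply_apply] at hval
    exact hπ.fdist_apply_ne_one hxy' (fdist_eq_one_of_fdist_apply _ hval)
  · have ha' : σ a ∉ Set.range hf.valueEmb := by
      rwa [hf.range_valueEmb, σ.injective.mem_set_image]
    simp only [← hf.valueEmb_apply_apply] at hax hay
    exact hπ.fdist_apply_ne_one (fdist_eq_one_of_fdist_apply f hpos)
      (fdist_eq_one_of_straddle ha' (π.injective.ne (ne_of_apply_ne f hxy)) hax hay)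

theorem exists_isOccurrence_swap (hf : IsOccurrence π σ f) {a p r : Fin n} (ha : a ∉ Set.range f)
    (hp : p ∉ Set.range f) (hsep : VSep σ a p r) :
    ∃ g, IsOccurrence π σ g ∧ (Set.range g)ᶜ = swap p r '' (Set.range f)ᶜ := by
  obtain ⟨-, -, -, hap, har, hval⟩ := hsep
  have hfp (x : Fin m) : f x ≠ p := fun h => hp ⟨x, h⟩
  have hfa (x : Fin m) : f x ≠ a := fun h => ha ⟨x, h⟩
  have hpos_side (x : Fin m) (hr : f x ≠ r) : f x < p ↔ f x < r := by
    have := hfp x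
    have := hfa x
    simp only [fdist] at hap har
    omega
  have hval_side (x : Fin m) (hr : σ (f x) ≠ σ r) : σ (f x) < σ p ↔ σ (f x) < σ r := by
    have := σ.injective.ne (hfp x)
    simp only [fdist] at hval
    omega
  have hmono : StrictMono fun x => swap p r (f x) := fun x y hxy =>
    (swap_lt_swap_iff (hfp x) (hfp y) (hpos_side x) (hpos_side y)).2 (f.strictMono hxy)
  refine ⟨OrderEmbedding.ofStrictMono _ hmono, fun x y => ?_, ?_⟩
  · simp only [OrderEmbedding.coe_ofStrictMono, σ.injective.map_swap]
    rw [swap_lt_swap_iff (σ.injective.ne (hfp x)) (σ.injective.ne (hfp y)) (hval_side x)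
      (hval_side y)]
    exact hf x y
  · rw [Set.image_compl_eq (swap p r).bijective, ← Set.range_comp]
    rfl

end IsOccurrence

theorem Contains.inv {m n : ℕ} {π : Perm (Fin m)} {σ : Perm (Fin n)} (h : Contains π σ) :
    Contains π⁻¹ σ⁻¹ :=
  let ⟨_, hf⟩ := h
  ⟨_, IsOccurrence.inv hf⟩

namespace IsOccurrence

variable {m n : ℕ} {π : Perm (Fin m)} {σ : Perm (Fin (n + 1))} {f : Fin m ↪o Fin (n + 1)}

theorem contains_nabla (hf : IsOccurrence π σ f) {a : Fin (n + 1)} (ha : a ∉ Set.range f) :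
    Contains π (nabla σ a) := by
  have hne (x : Fin m) : f x ≠ a := fun h => ha ⟨x, h⟩
  choose g hg using fun x => Fin.exists_succAbove_eq (hne x)
  have hmono : StrictMono g := fun x y hxy => by
    rw [← Fin.succAbove_lt_succAbove_iff (p := a), hg, hg]
    exact f.strictMono hxy
  refine ⟨OrderEmbedding.ofStrictMono g hmono, fun x y => ?_⟩
  rw [hf x y, ← hg, ← hg]
  exact (isOccurrence_nabla σ a _ _).symm

theorem exists_separates_of_not_isKing_nabla (hf : IsOccurrence π σ f)
    (hσ : IsKing σ) (hπ : IsKing π) {a b : Fin (n + 1)} (hab : (Set.range f)ᶜ = {a, b})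
    (h : ¬IsKing (nabla σ a)) : ∃ k, Separates σ a b k := by
  have mem_range {c} (hca : c ≠ a) (hcb : c ≠ b) : c ∈ Set.range f := by
    rw [← Set.notMem_compl_iff, hab]
    simp [hca, hcb]
  have ha : a ∉ Set.range f := hab.ge (.inl rfl)
  obtain ⟨j, k, hsep⟩ := hσ.exists_separates_of_not_isKing_nabla h
  obtain ⟨haj, hak⟩ : a ≠ j ∧ a ≠ k := by
    rcases hsep with hsep | hsep <;> exact ⟨hsep.1, hsep.2.1⟩
  by_cases hj : j = b
  · exact ⟨k, hj ▸ hsep⟩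
  by_cases hk : k = b
  · exact ⟨j, hk ▸ hsep.symm⟩
  obtain ⟨x, rfl⟩ := mem_range haj.symm hj
  obtain ⟨y, rfl⟩ := mem_range hak.symm hk
  exact absurd hsep (hf.not_separates hπ ha x y)

theorem exists_isKing_of_covBy (hf : IsOccurrence π σ f) (hσ : IsKing σ)
    (hπ : IsKing π) {p q : Fin (n + 1)} (hpq : p ⋖ q) (hqp : (Set.range f)ᶜ = {q, p}) :
    ∃ τ : Perm (Fin n), IsKing τ ∧ Contains π τ ∧ Contains τ σ := by
  induction q using WellFoundedGT.induction generalizing p f with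
  | ind q ih =>
    have hq : q ∉ Set.range f := hqp.ge (.inl rfl)
    have hp : p ∉ Set.range f := hqp.ge (.inr rfl)
    by_cases hτ : IsKing (nabla σ q)
    · exact ⟨_, hτ, hf.contains_nabla hq, nabla_contains σ q⟩
    have hdist : fdist q p = 1 := fdist_eq_one_iff_covBy.2 (.inr hpq)
    obtain ⟨r, hsep | ⟨-, -, -, hval, -⟩⟩ := hf.exists_separates_of_not_isKing_nabla hσ hπ hqp hτ
    · obtain ⟨g, hg, hrange⟩ := hf.exists_isOccurrence_swap hq hp hsep
      obtain ⟨hne_qp, hne_qr, hne_pr, -, hqr, -⟩ := hsep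
      have hqr' : q ⋖ r := (fdist_eq_one_iff_covBy.1 hqr).resolve_right
        fun hrq => hne_pr (hpq.unique_left hrq)
      refine ih r hqr'.lt hg hqr' ?_
      rw [hrange, hqp, Set.image_pair, swap_apply_of_ne_of_ne hne_qp hne_qr, swap_apply_left,
        Set.pair_comm]
    · exact absurd hval (hσ.fdist_apply_ne_one hdist)

theorem exists_isKing_of_fdist (hf : IsOccurrence π σ f) (hσ : IsKing σ)
    (hπ : IsKing π) {a b : Fin (n + 1)} (hdist : fdist a b = 1) (hab : (Set.range f)ᶜ = {a, b}) :
    ∃ τ : Perm (Fin n), IsKing τ ∧ Contains π τ ∧ Contains τ σ := by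
  rcases fdist_eq_one_iff_covBy.1 hdist with h | h
  · exact hf.exists_isKing_of_covBy hσ hπ h (hab.trans (Set.pair_comm a b))
  · exact hf.exists_isKing_of_covBy hσ hπ h hab

theorem exists_isKing_between (hf : IsOccurrence π σ f) (hσ : IsKing σ) (hπ : IsKing π)
    {a b : Fin (n + 1)} (hab : (Set.range f)ᶜ = {a, b}) :
    ∃ τ : Perm (Fin n), IsKing τ ∧ Contains π τ ∧ Contains τ σ := by
  have ha : a ∉ Set.range f := hab.ge (.inl rfl)
  by_cases hτ : IsKing (nabla σ a)
  · exact ⟨_, hτ, hf.contains_nabla ha, nabla_contains σ a⟩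
  obtain ⟨k, ⟨-, -, -, hpos, -⟩ | ⟨-, -, -, hval, -⟩⟩ :=
    hf.exists_separates_of_not_isKing_nabla hσ hπ hab hτ
  · exact hf.exists_isKing_of_fdist hσ hπ hpos hab
  · have hrange : (Set.range hf.valueEmb)ᶜ = {σ a, σ b} := by
      rw [hf.range_valueEmb, ← Set.image_compl_eq σ.bijective, hab, Set.image_pair]
    obtain ⟨τ, hτ, hπτ, hτσ⟩ := hf.inv.exists_isKing_of_fdist hσ.inv hπ.inv hval hrange
    exact ⟨τ⁻¹, hτ.inv, inv_inv π ▸ hπτ.inv, inv_inv σ ▸ hτσ.inv⟩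

end IsOccurrence

theorem ncard_compl_range {α β : Type*} [Finite β] {f : α → β} (hf : f.Injective) :
    (Set.range f)ᶜ.ncard = Nat.card β - Nat.card α := by
  rw [Set.ncard_compl, Set.ncard_range_of_injective hf]

/-- a king of length `n-2` below a king of length `n > 4` has a king
of length `n-1` strictly in between. -/
theorem grandson_implies_son (n : ℕ) (hn : 4 < n)
    (σ : Equiv.Perm (Fin n)) (hσ : IsKing σ)
    (π : Equiv.Perm (Fin (n - 2))) (hπ : IsKing π) (hπσ : StrictContains π σ) :
    ∃ τ : Equiv.Perm (Fin (n - 1)),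
      IsKing τ ∧ StrictContains π τ ∧ StrictContains τ σ := by
  obtain ⟨N, rfl⟩ : ∃ N, n = N + 2 := ⟨n - 2, by omega⟩
  obtain ⟨⟨f, hf⟩, -⟩ := hπσ
  have hcard : (Set.range f)ᶜ.ncard = 2 := by
    rw [ncard_compl_range f.injective, Nat.card_fin, Nat.card_fin]
    omega
  obtain ⟨a, b, -, hab⟩ := Set.ncard_eq_two.1 hcard
  obtain ⟨τ, hτ, hπτ, hτσ⟩ := IsOccurrence.exists_isKing_between (m := N) (n := N + 1) hf hσ hπ hab
  exact ⟨τ, hτ, ⟨hπτ, by omega⟩, ⟨hτσ, by omega⟩⟩
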